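/- For all integers k ≥ 2 and p ≥ 2, mdi_k(S'_{p,⌊k/2⌋+1}) = f_k(p·(⌊k/2⌋+1)) and mdi_k(S_{p,⌊k/2⌋+1}) = f_k(p·(⌊k/2⌋+1) + 1). -/

import Mathlib

/-- `J` is a distance-`k` independent set in `G`: any two distinct vertices of `J`
are at graph distance at least `k + 1`. -/
def DkIndep {V : Type*} (G : SimpleGraph V) (k : ℕ) (J : Set V) : Prop :=
  ∀ ⦃u⦄, u ∈ J → ∀ ⦃v⦄, v ∈ J → u ≠ v → k + 1 ≤ G.dist u v

/-- `J` is a maximal distance-`k` independent set (`k`-MDIS) of `G`. -/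
def MaxDkIndep {V : Type*} (G : SimpleGraph V) (k : ℕ) (J : Set V) : Prop :=
  DkIndep G k J ∧ ∀ J', DkIndep G k J' → J ⊆ J' → J' = J

/-- `mdi G k` is the number of maximal distance-`k` independent sets of `G`. -/
noncomputable def mdi {V : Type*} (G : SimpleGraph V) (k : ℕ) : ℕ :=
  {J : Set V | MaxDkIndep G k J}.ncard

/-- `f_k(n)` from the paper. -/
def fk (k n : ℕ) : ℕ :=
  if n ≤ k + 1 then n else n - (n - k % 2) / (k / 2 + 1) + 1

/-- closed ball `N_k[x]`. -/
def ball {V : Type*} (G : SimpleGraph V) (k : ℕ) (x : V) : Set V :=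
  {v | G.dist x v ≤ k}

/-- a leaf is a vertex of degree 1. -/
def IsLeaf {V : Type*} (G : SimpleGraph V) (v : V) : Prop :=
  (G.neighborSet v).ncard = 1

/-- eccentricity of a vertex. -/
noncomputable def ecc {V : Type*} [Fintype V] (G : SimpleGraph V) (v : V) : ℕ :=
  Finset.univ.sup (G.dist v)

/-- diameter of a finite graph. -/
noncomputable def gdiam {V : Type*} [Fintype V] (G : SimpleGraph V) : ℕ :=
  Finset.univ.sup (ecc G)

/-- a central vertex is one of minimum eccentricity. -/
def IsCentral {V : Type*} [Fintype V] (G : SimpleGraph V) (v : V) : Prop :=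
  ∀ u, ecc G v ≤ ecc G u

/-- a `k`-twin: some other vertex has the same closed `k`-ball. -/
def KTwin {V : Type*} (G : SimpleGraph V) (k : ℕ) (u : V) : Prop :=
  ∃ v, v ≠ u ∧ ball G k u = ball G k v

/-- a diametral leaf: a leaf whose eccentricity equals the diameter. -/
def IsDiametralLeaf {V : Type*} [Fintype V] (G : SimpleGraph V) (u : V) : Prop :=
  IsLeaf G u ∧ ecc G u = gdiam G

/-- a `k`-special pair. -/
def KSpecial {V : Type*} [Fintype V] (G : SimpleGraph V) (k : ℕ) (x y : V) : Prop :=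
  IsDiametralLeaf G x ∧ IsDiametralLeaf G y ∧ KTwin G k x ∧ KTwin G k y ∧
    ball G k x ≠ ball G k y

/-- `mdi*_k(G, ℓ)`. -/
noncomputable def mdiStar {V : Type*} (G : SimpleGraph V) (k : ℕ) (ℓ : V) : ℕ :=
  {J : Set V | MaxDkIndep G k J ∧ ℓ ∈ J ∧ ∃ w ∉ J, ball G k w ∩ J = {ℓ}}.ncard

/-- The spider tree `S_{p,m}`: a center (`none`) together with `p` legs of `m` vertices. -/
def spider (p m : ℕ) : SimpleGraph (Option (Fin p × Fin m)) :=
  SimpleGraph.fromRel fun a b =>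
    match a, b with
    | none, some (_, j) => (j : ℕ) = 0
    | some (i, j), some (i', j') => i = i' ∧ (j : ℕ) + 1 = (j' : ℕ)
    | _, _ => False

/-- `S'_{p,m}`: the spider `S_{p,m}` with one leaf at distance `m` from the center removed. -/
def spider' (p m : ℕ) (hp : 0 < p) (hm : 0 < m) :=
  (spider p m).induce
    {v | v ≠ some (⟨0, hp⟩, ⟨m - 1, Nat.sub_lt hm Nat.one_pos⟩)}

/-- The double spider `B_{p₁,p₂,s}`: two adjacent centers (`Sum.inl false`, `Sum.inl true`),
with `p₁` legs of `s` vertices on the first and `p₂` legs of `s` vertices on the second. -/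
def btree (p₁ p₂ s : ℕ) : SimpleGraph (Bool ⊕ ((Fin p₁ ⊕ Fin p₂) × Fin s)) :=
  SimpleGraph.fromRel fun a b =>
    match a, b with
    | Sum.inl x, Sum.inl y => x ≠ y
    | Sum.inl false, Sum.inr (Sum.inl _, j) => (j : ℕ) = 0
    | Sum.inl true, Sum.inr (Sum.inr _, j) => (j : ℕ) = 0
    | Sum.inr (c, j), Sum.inr (c', j') => c = c' ∧ (j : ℕ) + 1 = (j' : ℕ)
    | _, _ => False

/-- `G` contains a subgraph isomorphic to `H`. -/
def ContainsSub {V W : Type*} (G : SimpleGraph V) (H : SimpleGraph W) : Prop :=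
  ∃ f : W → V, Function.Injective f ∧ ∀ a b, H.Adj a b → G.Adj (f a) (f b)

/-- A pendant path on `s` vertices `P 0, …, P (s-1)` attached to `w`:
`P 0` is a leaf, consecutive vertices are adjacent, interior vertices have degree 2,
and `P (s-1)` is adjacent to `w`. -/
def IsPendantPath {V : Type*} (T : SimpleGraph V) (s : ℕ) (P : ℕ → V) (w : V) : Prop :=
  Set.InjOn P (Set.Iio s) ∧ (∀ i < s, P i ≠ w) ∧ IsLeaf T (P 0) ∧
    (∀ i, i + 1 < s → T.Adj (P i) (P (i + 1))) ∧
    (∀ i, 0 < i → i < s → (T.neighborSet (P i)).ncard = 2) ∧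
    T.Adj (P (s - 1)) w

/-- Isomorphism of simple graphs on `Fin n` as a setoid. -/
def graphSetoid (n : ℕ) : Setoid (SimpleGraph (Fin n)) where
  r G H := Nonempty (G ≃g H)
  iseqv := ⟨fun _ => ⟨SimpleGraph.Iso.refl⟩, fun ⟨e⟩ => ⟨e.symm⟩, fun ⟨e⟩ ⟨f⟩ => ⟨e.trans f⟩⟩

/-- The number of isomorphism classes of graphs in a set of graphs on `Fin n`. -/
noncomputable def numIsoClasses {n : ℕ} (S : Set (SimpleGraph (Fin n))) : ℕ :=
  ((fun G => Quotient.mk (graphSetoid n) G) '' S).ncard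

/-!
Call the ends of the legs of `S_{p,m}` its feet, where `m = ⌊k/2⌋ + 1`. Two vertices that are not
feet are at distance at most `2(m - 1) ≤ k`, while two feet are at distance `2m > k`: the `k`-th
power of the spider is a split graph. A maximal independent set of a split graph is either
determined by its unique clique vertex, or it is the whole independent side, provided that this side
dominates the graph. So the count is the number of vertices that are not feet, plus one if the feet
dominate within distance `k`. Deleting a leaf does not change the remaining distances, so
`S'_{p,m}` inherits the split; its feet dominate exactly when `k` is odd and some other leg exists.
-/

/-! ### Graphs whose `k`-th power is a split graph -/

section DkSplit

variable {V : Type*} {G : SimpleGraph V} {k : ℕ}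

theorem DkIndep.insert {J : Set V} (hJ : DkIndep G k J) {a : V}
    (ha : ∀ v ∈ J, k < G.dist a v) : DkIndep G k (insert a J) := by
  rintro u (rfl | hu) v (rfl | hv) huv
  · exact absurd rfl huv
  · exact ha v hv
  · rw [G.dist_comm]
    exact ha u hu
  · exact hJ hu hv huv

theorem maxDkIndep_iff_forall_notMem {J : Set V} :
    MaxDkIndep G k J ↔ DkIndep G k J ∧ ∀ a ∉ J, ∃ v ∈ J, G.dist a v ≤ k := by
  refine ⟨fun ⟨hJ, hmax⟩ ↦ ⟨hJ, fun a ha ↦ ?_⟩, fun ⟨hJ, hdom⟩ ↦ ⟨hJ, fun J' hJ' hsub ↦ ?_⟩⟩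
  · by_contra! hfar
    exact ha (hmax _ (hJ.insert hfar) (J.subset_insert a) ▸ J.mem_insert a)
  · refine (hsub.antisymm fun a ha ↦ ?_).symm
    by_contra haJ
    obtain ⟨v, hv, hav⟩ := hdom a haJ
    have := hJ' ha (hsub hv) (ne_of_mem_of_not_mem hv haJ).symm
    omega

/-- `IsDkSplit G k I` says that the `k`-th power of `G` is a split graph with independent side `I`
and clique side `Iᶜ`. -/
structure IsDkSplit (G : SimpleGraph V) (k : ℕ) (I : Set V) : Prop where
  dist_le : ∀ u ∉ I, ∀ v ∉ I, G.dist u v ≤ k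
  dkIndep : DkIndep G k I

/-- The `k`-MDIS containing the clique vertex `a ∉ I`, when `IsDkSplit G k I`: the vertex `a`
together with all vertices of the independent side that are at distance more than `k` from it. -/
def cliqueMDIS (G : SimpleGraph V) (k : ℕ) (I : Set V) (a : V) : Set V :=
  insert a (I \ ball G k a)

theorem cliqueMDIS_injOn (G : SimpleGraph V) (k : ℕ) (I : Set V) :
    Set.InjOn (cliqueMDIS G k I) Iᶜ := by
  intro a ha b _ hab
  have hmem : a ∈ cliqueMDIS G k I b := hab ▸ Set.mem_insert a _
  exact hmem.resolve_right fun h ↦ ha h.1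

namespace IsDkSplit

variable {I : Set V}

theorem dkIndep_cliqueMDIS (h : IsDkSplit G k I) (a : V) :
    DkIndep G k (cliqueMDIS G k I a) :=
  DkIndep.insert (fun _ hu _ hv ↦ h.dkIndep hu.1 hv.1) fun _ hv ↦ not_le.mp hv.2

theorem subset_cliqueMDIS (h : IsDkSplit G k I) {J : Set V} (hJ : DkIndep G k J) {a : V}
    (haI : a ∉ I) (haJ : a ∈ J) : J ⊆ cliqueMDIS G k I a := by
  intro v hv
  by_cases hva : v = a
  · exact .inl hva
  · have hdist : k < G.dist a v := hJ haJ hv (Ne.symm hva)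
    exact .inr ⟨by_contra fun hvI ↦ hdist.not_ge (h.dist_le a haI v hvI), hdist.not_ge⟩

theorem maxDkIndep_cliqueMDIS (h : IsDkSplit G k I) {a : V} (ha : a ∉ I) :
    MaxDkIndep G k (cliqueMDIS G k I a) :=
  ⟨h.dkIndep_cliqueMDIS a, fun _ hJ hsub ↦
    (h.subset_cliqueMDIS hJ ha (hsub (Set.mem_insert a _))).antisymm hsub⟩

theorem maxDkIndep_iff (h : IsDkSplit G k I) {J : Set V} :
    MaxDkIndep G k J ↔ J ∈ cliqueMDIS G k I '' Iᶜ ∨ J = I ∧ MaxDkIndep G k I := by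
  constructor
  · intro hJ
    by_cases hmeet : ∃ a ∉ I, a ∈ J
    · obtain ⟨a, haI, haJ⟩ := hmeet
      exact .inl ⟨a, haI, hJ.2 _ (h.dkIndep_cliqueMDIS a) (h.subset_cliqueMDIS hJ.1 haI haJ)⟩
    · have hIJ : I = J :=
        hJ.2 _ h.dkIndep fun v hvJ ↦ by_contra fun hvI ↦ hmeet ⟨v, hvI, hvJ⟩
      exact .inr ⟨hIJ.symm, hIJ ▸ hJ⟩
  · rintro (⟨a, ha, rfl⟩ | ⟨rfl, hmax⟩)
    · exact h.maxDkIndep_cliqueMDIS ha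
    · exact hmax

theorem mdi_eq (h : IsDkSplit G k I) (hI : Iᶜ.Finite) [Decidable (MaxDkIndep G k I)] :
    mdi G k = Iᶜ.ncard + if MaxDkIndep G k I then 1 else 0 := by
  have hcard : (cliqueMDIS G k I '' Iᶜ).ncard = Iᶜ.ncard := (cliqueMDIS_injOn G k I).ncard_image
  have hnotMem : I ∉ cliqueMDIS G k I '' Iᶜ := by
    rintro ⟨a, ha, haI⟩
    exact ha (haI ▸ Set.mem_insert a _ : a ∈ I)
  split_ifs with hmax
  · have hset : {J | MaxDkIndep G k J} = insert I (cliqueMDIS G k I '' Iᶜ) := by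
      ext J
      exact h.maxDkIndep_iff.trans (by simp only [hmax, and_true, Set.mem_insert_iff, or_comm])
    rw [mdi, hset, Set.ncard_insert_of_notMem hnotMem (hI.image _), hcard]
  · have hset : {J | MaxDkIndep G k J} = cliqueMDIS G k I '' Iᶜ := by
      ext J
      exact h.maxDkIndep_iff.trans (by simp only [hmax, and_false, or_false])
    rw [mdi, hset, hcard, add_zero]

theorem induce (h : IsDkSplit G k I) {s : Set V}
    (hs : ∀ u v : s, (G.induce s).dist u v = G.dist u v) :
    IsDkSplit (G.induce s) k (Subtype.val ⁻¹' I) where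
  dist_le u hu v hv := hs u v ▸ h.dist_le u hu v hv
  dkIndep u hu v hv huv := hs u v ▸ h.dkIndep hu hv (Subtype.val_injective.ne huv)

end IsDkSplit

end DkSplit

/-! ### Distances -/

section Dist

variable {V : Type*} {G : SimpleGraph V}

theorem sub_le_dist_of_forall_adj {f : V → ℤ} (hf : ∀ u v, G.Adj u v → f u - f v ≤ 1)
    {u v : V} (huv : G.Reachable u v) : f u - f v ≤ G.dist u v := by
  obtain ⟨w, hw⟩ := huv.exists_walk_length_eq_dist
  rw [← hw]
  clear hw huv
  induction w with
  | nil => simp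
  | cons hadj w ih =>
    have := hf _ _ hadj
    rw [SimpleGraph.Walk.length_cons]
    push_cast
    linarith

theorem dist_induce_of_subsingleton_neighborSet {s : Set V}
    (hs : ∀ x ∉ s, (G.neighborSet x).Subsingleton) {u v : s} (huv : G.Reachable u v) :
    (G.induce s).dist u v = G.dist u v := by
  obtain ⟨w, hpath, hw⟩ := huv.exists_path_of_dist
  have hws : ∀ x ∈ w.support, x ∈ s := by
    intro x hx
    by_contra hxs
    exact hpath.isTrail.not_mem_support_of_subsingleton_neighborSet
      (ne_of_mem_of_not_mem u.2 hxs).symm (ne_of_mem_of_not_mem v.2 hxs).symm (hs x hxs) hx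
  have hlen : (w.induce s hws).length = w.length := by
    rw [← SimpleGraph.Walk.length_map (SimpleGraph.Embedding.induce s).toHom,
      SimpleGraph.Walk.map_induce]
    rfl
  apply le_antisymm
  · exact hw ▸ hlen ▸ SimpleGraph.dist_le (w.induce s hws)
  · obtain ⟨w', hw'⟩ := (w.induce s hws).reachable.exists_walk_length_eq_dist
    rw [← hw', ← SimpleGraph.Walk.length_map (SimpleGraph.Embedding.induce s).toHom]
    exact SimpleGraph.dist_le _

end Dist

/-! ### Spiders -/

section Spider

variable {p m : ℕ}

/-- The vertex of the spider `S_{p,m}` on leg `i` at distance `h` from the center; for `h = 0` this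
is the center itself, whatever `i` is. -/
def leg (i : Fin p) : Fin (m + 1) → Option (Fin p × Fin m) :=
  Fin.cases none fun j ↦ some (i, j)

/-- The leaf at the end of leg `i` of the spider `S_{p,m}`. -/
abbrev foot (i : Fin p) : Option (Fin p × Fin m) :=
  leg i (Fin.last m)

theorem exists_leg_eq (hp : 0 < p) (v : Option (Fin p × Fin m)) : ∃ i h, leg i h = v := by
  rcases v with _ | ⟨i, j⟩
  · exact ⟨⟨0, hp⟩, 0, rfl⟩
  · exact ⟨i, j.succ, rfl⟩

theorem foot_injective : Function.Injective (foot : Fin p → Option (Fin p × Fin (m + 1))) := by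
  intro i i' h
  exact congrArg Prod.fst (Option.some.inj h)

theorem spider_adj_none_some {i : Fin p} {j : Fin m} :
    (spider p m).Adj none (some (i, j)) ↔ (j : ℕ) = 0 := by
  simp [spider]

theorem spider_adj_some_some {i i' : Fin p} {j j' : Fin m} :
    (spider p m).Adj (some (i, j)) (some (i', j')) ↔
      i = i' ∧ ((j : ℕ) + 1 = j' ∨ (j' : ℕ) + 1 = j) := by
  simp only [spider, SimpleGraph.fromRel_adj, ne_eq, Option.some.injEq, Prod.mk.injEq, Fin.ext_iff]
  omega

theorem spider_adj_leg (i : Fin p) (h : Fin m) :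
    (spider p m).Adj (leg i h.castSucc) (leg i h.succ) := by
  cases m with
  | zero => exact h.elim0
  | succ m =>
    cases h using Fin.cases with
    | zero => exact spider_adj_none_some.2 rfl
    | succ h => exact spider_adj_some_some.2 ⟨rfl, .inl rfl⟩

theorem exists_walk_leg_length_eq (i : Fin p) {a b : Fin (m + 1)} (hab : a ≤ b) :
    ∃ w : (spider p m).Walk (leg i a) (leg i b), w.length = b - a := by
  induction b using Fin.induction with
  | zero =>
    obtain rfl : a = 0 := Fin.le_zero_iff.1 hab
    exact ⟨.nil, rfl⟩
  | succ b ih =>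
    rcases hab.eq_or_lt with rfl | hlt
    · exact ⟨.nil, (Nat.sub_self _).symm⟩
    · have hle : a ≤ b.castSucc := Fin.le_castSucc_iff.2 hlt
      obtain ⟨w, hw⟩ := ih hle
      refine ⟨w.concat (spider_adj_leg i b), ?_⟩
      rw [SimpleGraph.Walk.length_concat, hw, Fin.val_castSucc, Fin.val_succ]
      exact (Nat.succ_sub hle).symm

theorem spider_connected (p m : ℕ) : (spider p m).Connected := by
  have hcenter : ∀ v, (spider p m).Reachable none v := by
    rintro (_ | ⟨i, j⟩)
    · exact .rfl
    · obtain ⟨w, -⟩ := exists_walk_leg_length_eq i (Fin.zero_le j.succ)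
      exact ⟨w⟩
  exact ⟨fun u v ↦ (hcenter u).symm.trans (hcenter v)⟩

/-- The position of a vertex of a spider on the line formed by leg `i`, on the positive side, and
all the other legs folded together on the negative side. -/
def signedHeight (i : Fin p) : Option (Fin p × Fin m) → ℤ
  | none => 0
  | some (i', j) => if i' = i then j + 1 else -(j + 1)

theorem signedHeight_leg_self (i : Fin p) (h : Fin (m + 1)) : signedHeight i (leg i h) = h := by
  cases h using Fin.cases <;> simp [signedHeight, leg]

theorem signedHeight_leg_of_ne {i i' : Fin p} (hi : i' ≠ i) (h : Fin (m + 1)) :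
    signedHeight i (leg i' h) = -h := by
  cases h using Fin.cases <;> simp [signedHeight, leg, hi]

theorem signedHeight_sub_le_one (i : Fin p) (u v : Option (Fin p × Fin m))
    (h : (spider p m).Adj u v) : signedHeight i u - signedHeight i v ≤ 1 := by
  rcases u with _ | ⟨i₁, j₁⟩ <;> rcases v with _ | ⟨i₂, j₂⟩ <;> simp only [signedHeight]
  · exact absurd h (spider p m).irrefl
  · have := spider_adj_none_some.1 h
    split_ifs <;> omega
  · have := spider_adj_none_some.1 h.symm
    split_ifs <;> omega
  · obtain ⟨rfl, hj⟩ := spider_adj_some_some.1 h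
    split_ifs <;> omega

theorem signedHeight_sub_le_dist (i : Fin p) (u v : Option (Fin p × Fin m)) :
    signedHeight i u - signedHeight i v ≤ (spider p m).dist u v :=
  sub_le_dist_of_forall_adj (signedHeight_sub_le_one i) (spider_connected p m u v)

theorem dist_leg_leg_le_sub (i : Fin p) {a b : Fin (m + 1)} (hab : a ≤ b) :
    (spider p m).dist (leg i a) (leg i b) ≤ b - a := by
  obtain ⟨w, hw⟩ := exists_walk_leg_length_eq i hab
  exact hw ▸ SimpleGraph.dist_le w

theorem dist_leg_leg_le_add (i j : Fin p) (a b : Fin (m + 1)) :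
    (spider p m).dist (leg i a) (leg j b) ≤ a + b := by
  have htriangle := (spider_connected p m).dist_triangle (u := leg i a) (v := none) (w := leg j b)
  have ha : (spider p m).dist none (leg i a) ≤ a := dist_leg_leg_le_sub i (Fin.zero_le a)
  have hb : (spider p m).dist none (leg j b) ≤ b := dist_leg_leg_le_sub j (Fin.zero_le b)
  rw [SimpleGraph.dist_comm] at ha
  omega

theorem dist_leg_leg_of_ne {i j : Fin p} (hij : i ≠ j) (a b : Fin (m + 1)) :
    (spider p m).dist (leg i a) (leg j b) = a + b := by
  have hlower := signedHeight_sub_le_dist i (leg i a) (leg j b)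
  rw [signedHeight_leg_self, signedHeight_leg_of_ne hij.symm] at hlower
  have hupper := dist_leg_leg_le_add i j a b
  omega

theorem subsingleton_neighborSet_foot (i : Fin p) :
    ((spider p (m + 1)).neighborSet (foot i)).Subsingleton := by
  have hcenter : (spider p (m + 1)).Adj (foot i) none → m = 0 := fun h ↦
    spider_adj_none_some.1 h.symm
  have hleg : ∀ i' (j : Fin (m + 1)), (spider p (m + 1)).Adj (foot i) (some (i', j)) →
      i = i' ∧ (j : ℕ) + 1 = m := by
    intro i' j h
    obtain ⟨rfl, hj⟩ := spider_adj_some_some.1 h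
    change m + 1 = (j : ℕ) ∨ (j : ℕ) + 1 = m at hj
    omega
  rintro (_ | ⟨i₁, j₁⟩) h₁ (_ | ⟨i₂, j₂⟩) h₂
  · rfl
  · have := hcenter h₁
    have := hleg _ _ h₂
    omega
  · have := hcenter h₂
    have := hleg _ _ h₁
    omega
  · obtain ⟨rfl, hj₁⟩ := hleg _ _ h₁
    obtain ⟨rfl, hj₂⟩ := hleg _ _ h₂
    obtain rfl : j₁ = j₂ := Fin.ext (by omega)
    rfl

theorem foot_ne_leg_castSucc (i j : Fin p) (h : Fin (m + 1)) :
    foot i ≠ leg j h.castSucc := by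
  intro heq
  have hheight : (m + 1 : ℤ) = h ∨ (m + 1 : ℤ) = -h := by
    rcases eq_or_ne j i with rfl | hij
    · exact .inl (by simpa [signedHeight_leg_self] using congrArg (signedHeight j) heq)
    · exact .inr (by
        simpa [signedHeight_leg_self, signedHeight_leg_of_ne hij] using
          congrArg (signedHeight i) heq)
  omega

theorem notMem_range_foot_iff (hp : 0 < p) {v : Option (Fin p × Fin (m + 1))} :
    v ∉ Set.range foot ↔ ∃ i, ∃ h : Fin (m + 1), leg i h.castSucc = v := by
  constructor
  · intro hv
    obtain ⟨i, h, rfl⟩ := exists_leg_eq hp v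
    rcases Fin.eq_castSucc_or_eq_last h with ⟨h, rfl⟩ | rfl
    · exact ⟨i, h, rfl⟩
    · exact absurd ⟨i, rfl⟩ hv
  · rintro ⟨j, h, rfl⟩ ⟨i, hi⟩
    exact foot_ne_leg_castSucc i j h hi

theorem ncard_compl_range_foot (p m : ℕ) :
    (Set.range (foot : Fin p → Option (Fin p × Fin (m + 1))))ᶜ.ncard = p * m + 1 := by
  have hadd := Set.ncard_add_ncard_compl (Set.range (foot : Fin p → Option (Fin p × Fin (m + 1))))
  rw [Set.ncard_range_of_injective foot_injective] at hadd
  simp only [Nat.card_eq_fintype_card, Fintype.card_option, Fintype.card_prod, Fintype.card_fin,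
    mul_add_one] at hadd
  omega

theorem isDkSplit_spider (hp : 0 < p) (k : ℕ) :
    IsDkSplit (spider p (k / 2 + 1)) k (Set.range foot) where
  dist_le u hu v hv := by
    obtain ⟨i, a, rfl⟩ := (notMem_range_foot_iff hp).1 hu
    obtain ⟨j, b, rfl⟩ := (notMem_range_foot_iff hp).1 hv
    refine (dist_leg_leg_le_add i j _ _).trans ?_
    simp only [Fin.val_castSucc]
    omega
  dkIndep := by
    rintro _ ⟨i, rfl⟩ _ ⟨j, rfl⟩ hij
    rw [dist_leg_leg_of_ne (ne_of_apply_ne foot hij), Fin.val_last]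
    omega

theorem maxDkIndep_range_foot {k : ℕ} (hp : 0 < p) (hk : 0 < k) :
    MaxDkIndep (spider p (k / 2 + 1)) k (Set.range foot) := by
  refine maxDkIndep_iff_forall_notMem.2 ⟨(isDkSplit_spider hp k).dkIndep, fun v hv ↦ ?_⟩
  obtain ⟨i, h, rfl⟩ := (notMem_range_foot_iff hp).1 hv
  refine ⟨foot i, ⟨i, rfl⟩, (dist_leg_leg_le_sub i (Fin.le_last _)).trans ?_⟩
  rw [Fin.val_last]
  omega

theorem mdi_spider {k : ℕ} (hp : 0 < p) (hk : 0 < k) :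
    mdi (spider p (k / 2 + 1)) k = p * (k / 2) + 2 := by
  classical
  rw [(isDkSplit_spider hp k).mdi_eq (Set.toFinite _), if_pos (maxDkIndep_range_foot hp hk),
    ncard_compl_range_foot]

theorem dist_induce_compl_foot (i : Fin p) (u v : ({foot i}ᶜ : Set _)) :
    ((spider p (m + 1)).induce {foot i}ᶜ).dist u v = (spider p (m + 1)).dist u v := by
  refine dist_induce_of_subsingleton_neighborSet ?_ (spider_connected p (m + 1) u v)
  intro x hx
  obtain rfl : x = foot i := not_not.1 hx
  exact subsingleton_neighborSet_foot i

theorem isDkSplit_induce_compl_foot (i : Fin p) (k : ℕ) :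
    IsDkSplit ((spider p (k / 2 + 1)).induce {foot i}ᶜ) k (Subtype.val ⁻¹' Set.range foot) :=
  (isDkSplit_spider i.pos k).induce (dist_induce_compl_foot i)

-- The top remaining vertex of the shortened leg `i` is the one hardest to dominate: the other
-- feet are at distance `2 * (k / 2) + 1` from it, which is `k` or `k + 1` by the parity of `k`.
theorem maxDkIndep_induce_compl_foot_iff (i : Fin p) (k : ℕ) :
    MaxDkIndep ((spider p (k / 2 + 1)).induce {foot i}ᶜ) k (Subtype.val ⁻¹' Set.range foot) ↔
      Odd k ∧ 1 < p := by
  rw [maxDkIndep_iff_forall_notMem, and_iff_right (isDkSplit_induce_compl_foot i k).dkIndep]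
  constructor
  · intro hdom
    let a : ({foot i}ᶜ : Set _) :=
      ⟨leg i (Fin.last (k / 2)).castSucc, (foot_ne_leg_castSucc i i _).symm⟩
    obtain ⟨⟨_, hji⟩, ⟨j, rfl⟩, hdist⟩ :=
      hdom a ((notMem_range_foot_iff i.pos).2 ⟨i, _, rfl⟩)
    have hij : i ≠ j := fun h ↦ hji (congrArg foot h.symm)
    rw [dist_induce_compl_foot, dist_leg_leg_of_ne hij] at hdist
    simp only [Fin.val_castSucc, Fin.val_last] at hdist
    exact ⟨Nat.odd_iff.2 (by omega), by have := Fin.val_ne_of_ne hij; omega⟩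
  · rintro ⟨hodd, hp⟩ ⟨v, hvi⟩ hv
    obtain ⟨i', h, rfl⟩ := (notMem_range_foot_iff i.pos).1 hv
    have : Nontrivial (Fin p) := Fin.nontrivial_iff_two_le.2 hp
    obtain ⟨j, hj⟩ := exists_ne i
    refine ⟨⟨foot j, foot_injective.ne hj⟩, ⟨j, rfl⟩, ?_⟩
    have hdist := dist_leg_leg_le_add i' j h.castSucc (Fin.last (k / 2 + 1))
    rw [Fin.val_castSucc, Fin.val_last] at hdist
    rw [dist_induce_compl_foot]
    have := Nat.odd_iff.1 hodd
    exact hdist.trans (by omega)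

theorem mdi_spider' (k : ℕ) (hp : 0 < p) :
    mdi (spider' p (k / 2 + 1) hp (k / 2).succ_pos) k =
      p * (k / 2) + 1 + if Odd k ∧ 1 < p then 1 else 0 := by
  classical
  let i : Fin p := ⟨0, hp⟩
  have hsub : (Set.range foot)ᶜ ⊆
      Set.range (Subtype.val : ({foot i}ᶜ : Set (Option (Fin p × Fin (k / 2 + 1)))) → _) := by
    rw [Subtype.range_coe]
    exact Set.compl_subset_compl.2 (Set.singleton_subset_iff.2 ⟨i, rfl⟩)
  change mdi ((spider p (k / 2 + 1)).induce {foot i}ᶜ) k = _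
  rw [(isDkSplit_induce_compl_foot i k).mdi_eq (Set.toFinite _),
    ← Set.preimage_compl,
    Set.ncard_preimage_of_injective_subset_range Subtype.val_injective hsub,
    ncard_compl_range_foot]
  simp only [maxDkIndep_induce_compl_foot_iff]

end Spider

/-! ### The values of `f_k` -/

section Fk

theorem fk_of_le {k n : ℕ} (h : n ≤ k + 1) : fk k n = n :=
  if_pos h

theorem fk_of_lt {k n : ℕ} (h : k + 1 < n) :
    fk k n = n - (n - k % 2) / (k / 2 + 1) + 1 :=
  if_neg h.not_ge

theorem fk_mul_div_two_succ_add_one {k p : ℕ} (hk : 0 < k) (hp : 0 < p) :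
    fk k (p * (k / 2 + 1) + 1) = p * (k / 2) + 2 := by
  have := Nat.mod_two_eq_zero_or_one k
  rcases Nat.eq_or_lt_of_le hp with rfl | hp
  · rw [fk_of_le] <;> omega
  · have hn : 2 * (k / 2 + 1) ≤ p * (k / 2 + 1) := Nat.mul_le_mul_right _ hp
    have hdiv : (p * (k / 2 + 1) + 1 - k % 2) / (k / 2 + 1) = p := by
      rw [Nat.div_eq_iff (by omega)]
      omega
    rw [fk_of_lt (by omega), hdiv, mul_add_one]
    omega

theorem fk_mul_div_two_succ (k : ℕ) {p : ℕ} (hp : 0 < p) :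
    fk k (p * (k / 2 + 1)) = p * (k / 2) + 1 + if Odd k ∧ 1 < p then 1 else 0 := by
  rcases Nat.eq_or_lt_of_le hp with rfl | hp
  · rw [fk_of_le (by omega), if_neg (by simp)]
    omega
  have hn : 2 * (k / 2 + 1) ≤ p * (k / 2 + 1) := Nat.mul_le_mul_right _ hp
  rcases Nat.even_or_odd k with heven | hodd
  · have hmod := Nat.even_iff.1 heven
    have hdiv : (p * (k / 2 + 1) - k % 2) / (k / 2 + 1) = p := by
      rw [hmod, Nat.sub_zero, Nat.mul_div_cancel _ (Nat.succ_pos _)]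
    rw [fk_of_lt (by omega), hdiv, if_neg (by simp [heven]), mul_add_one]
    omega
  · have hmod := Nat.odd_iff.1 hodd
    rw [if_pos ⟨hodd, hp⟩]
    rcases Nat.eq_or_lt_of_le hp with rfl | hp
    · rw [fk_of_le] <;> omega
    · have hn' : 3 * (k / 2 + 1) ≤ p * (k / 2 + 1) := Nat.mul_le_mul_right _ hp
      have hdiv : (p * (k / 2 + 1) - k % 2) / (k / 2 + 1) = p - 1 := by
        rw [hmod, mul_comm, Nat.mul_sub_div 0 _ _ (by positivity), Nat.zero_div]
      rw [fk_of_lt (by omega), hdiv, mul_add_one]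
      omega

end Fk

theorem stmt_1_general (k p : ℕ) (hk : 0 < k) (hp : 0 < p) :
    mdi (spider' p (k / 2 + 1) hp (k / 2).succ_pos) k = fk k (p * (k / 2 + 1)) ∧
    mdi (spider p (k / 2 + 1)) k = fk k (p * (k / 2 + 1) + 1) :=
  ⟨(mdi_spider' k hp).trans (fk_mul_div_two_succ k hp).symm,
    (mdi_spider hp hk).trans (fk_mul_div_two_succ_add_one hk hp).symm⟩

/-- For `k ≥ 2` and `p ≥ 2`,
`mdi_k(S'_{p,⌊k/2⌋+1}) = f_k(p(⌊k/2⌋+1))` and `mdi_k(S_{p,⌊k/2⌋+1}) = f_k(p(⌊k/2⌋+1)+1)`. -/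
theorem stmt_1 (k p : ℕ) (hk : 2 ≤ k) (hp : 2 ≤ p) :
    mdi (spider' p (k / 2 + 1) (by omega) (by omega)) k = fk k (p * (k / 2 + 1)) ∧
    mdi (spider p (k / 2 + 1)) k = fk k (p * (k / 2 + 1) + 1) :=
  stmt_1_general k p (by omega) (by omega)
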